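/- Let (M, H) be a right cocycle double cross product pair of a coalgebra M (with distinguished group-like e) and a bialgebra H, with coalgebra maps ▷: H⊗M→M, ψ: H⊗M→H, ·: M⊗M→M, θ: M⊗M→H satisfying conditions (3.14)–(3.23) of Proposition 3.2. Then the comultiplication Δ(x⊗h) = (x₍₁₎⊗h₍₁₎)⊗(x₍₂₎⊗h₍₂₎) is multiplicative with respect to the product (x⊗h)(x'⊗h') = x₍₁₎·(h₍₁₎▷x'₍₁₎) ⊗ θ(x₍₂₎, h₍₂₎▷x'₍₂₎) ψ(h₍₃₎, x'₍₃₎) h' if and only if ψ(h₍₂₎,x₍₂₎) ⊗ h₍₁₎▷x₍₁₎ = ψ(h₍₁₎,x₍₁₎) ⊗ h₍₂₎▷x₍₂₎ and θ(x₍₂₎,x'₍₂₎) ⊗ x₍₁₎·x'₍₁₎ = θ(x₍₁₎,x'₍₁₎) ⊗ x₍₂₎·x'₍₂₎. -/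

import Mathlib

open TensorProduct LinearMap

section

variable (k : Type*) [Field k]

/-- Sweedler pairing: `(a ⊗ b) ↦ u(a₍₁₎ ⊗ b₍₁₎) ⊗ v(a₍₂₎ ⊗ b₍₂₎)`. -/
noncomputable def sweedlerPair {A B C D : Type*}
    [AddCommGroup A] [Module k A] [AddCommGroup B] [Module k B]
    [AddCommGroup C] [Module k C] [AddCommGroup D] [Module k D]
    (dA : A →ₗ[k] A ⊗[k] A) (dB : B →ₗ[k] B ⊗[k] B)
    (u : A ⊗[k] B →ₗ[k] C) (v : A ⊗[k] B →ₗ[k] D) :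
    A ⊗[k] B →ₗ[k] C ⊗[k] D :=
  (TensorProduct.map u v) ∘ₗ
    (TensorProduct.tensorTensorTensorComm k A A B B).toLinearMap ∘ₗ
    (TensorProduct.map dA dB)

variable (M H : Type*)
  [AddCommGroup M] [Module k M] [AddCommGroup H] [Module k H]

/-- The multiplication of the (right) cocycle double cross product
`(x⊗h)(x'⊗h') = x₍₁₎·(h₍₁₎▷x'₍₁₎) ⊗ θ(x₍₂₎, h₍₂₎▷x'₍₂₎) ψ(h₍₃₎, x'₍₃₎) h'`. -/
noncomputable def cdcpMul
    (dM : M →ₗ[k] M ⊗[k] M) (dH : H →ₗ[k] H ⊗[k] H)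
    (act : H ⊗[k] M →ₗ[k] M) (psi : H ⊗[k] M →ₗ[k] H)
    (mM : M ⊗[k] M →ₗ[k] M) (th : M ⊗[k] M →ₗ[k] H)
    (mH : H ⊗[k] H →ₗ[k] H) :
    (M ⊗[k] H) ⊗[k] (M ⊗[k] H) →ₗ[k] M ⊗[k] H :=
  -- `(h ⊗ x') ↦ (h₍₁₎▷x'₍₁₎) ⊗ ((h₍₂₎▷x'₍₂₎) ⊗ ψ(h₍₃₎, x'₍₃₎))`
  letI Θ : H ⊗[k] M →ₗ[k] M ⊗[k] (M ⊗[k] H) :=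
    sweedlerPair k dH dM act (sweedlerPair k dH dM act psi)
  -- `x₂ ⊗ ((a₂ ⊗ b) ⊗ h') ↦ (θ(x₂ ⊗ a₂) ∗ b) ∗ h'`
  letI R : M ⊗[k] ((M ⊗[k] H) ⊗[k] H) →ₗ[k] H :=
    mH ∘ₗ (LinearMap.rTensor H mH) ∘ₗ
      (LinearMap.rTensor H (LinearMap.rTensor H th)) ∘ₗ
      (LinearMap.rTensor H ((TensorProduct.assoc k M M H).symm.toLinearMap)) ∘ₗ
      (TensorProduct.assoc k M (M ⊗[k] H) H).symm.toLinearMap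
  (TensorProduct.map mM R) ∘ₗ
    (TensorProduct.tensorTensorTensorComm k M M M ((M ⊗[k] H) ⊗[k] H)).toLinearMap ∘ₗ
    (LinearMap.lTensor (M ⊗[k] M)
      ((TensorProduct.assoc k M (M ⊗[k] H) H).toLinearMap)) ∘ₗ
    (LinearMap.lTensor (M ⊗[k] M) (LinearMap.rTensor H Θ)) ∘ₗ
    (LinearMap.lTensor (M ⊗[k] M) ((TensorProduct.assoc k H M H).symm.toLinearMap)) ∘ₗ
    (TensorProduct.assoc k (M ⊗[k] M) H (M ⊗[k] H)).toLinearMap ∘ₗ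
    (LinearMap.rTensor (M ⊗[k] H) (LinearMap.rTensor H dM))

/-- The data and axioms of a (right) cocycle double cross product pair `(M, H)`:
`M` a coalgebra with group-like `e`, `H` a bialgebra, the four structure maps
`▷, ψ, ·, θ` coalgebra morphisms satisfying the normalization conditions and the
conditions (3.14)–(3.21) of Proposition 3.2. -/
noncomputable def CocycleDCPPair
    (dM : M →ₗ[k] M ⊗[k] M) (eM : M →ₗ[k] k)
    (dH : H →ₗ[k] H ⊗[k] H) (eH : H →ₗ[k] k)
    (act : H ⊗[k] M →ₗ[k] M) (psi : H ⊗[k] M →ₗ[k] H)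
    (mM : M ⊗[k] M →ₗ[k] M) (th : M ⊗[k] M →ₗ[k] H)
    (mH : H ⊗[k] H →ₗ[k] H) (e : M) (oneH : H) : Prop :=
  -- `M` is a coalgebra
  ((TensorProduct.assoc k M M M).toLinearMap ∘ₗ (LinearMap.rTensor M dM) ∘ₗ dM =
    (LinearMap.lTensor M dM) ∘ₗ dM) ∧
  ((TensorProduct.lid k M).toLinearMap ∘ₗ (LinearMap.rTensor M eM) ∘ₗ dM =
    LinearMap.id) ∧
  ((TensorProduct.rid k M).toLinearMap ∘ₗ (LinearMap.lTensor M eM) ∘ₗ dM =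
    LinearMap.id) ∧
  -- `H` is a coalgebra
  ((TensorProduct.assoc k H H H).toLinearMap ∘ₗ (LinearMap.rTensor H dH) ∘ₗ dH =
    (LinearMap.lTensor H dH) ∘ₗ dH) ∧
  ((TensorProduct.lid k H).toLinearMap ∘ₗ (LinearMap.rTensor H eH) ∘ₗ dH =
    LinearMap.id) ∧
  ((TensorProduct.rid k H).toLinearMap ∘ₗ (LinearMap.lTensor H eH) ∘ₗ dH =
    LinearMap.id) ∧
  -- `H` is a bialgebra (associative unital multiplication, `Δ_H`, `ε_H` multiplicative)
  (mH ∘ₗ (LinearMap.rTensor H mH) =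
    mH ∘ₗ (LinearMap.lTensor H mH) ∘ₗ (TensorProduct.assoc k H H H).toLinearMap) ∧
  (∀ h : H, mH (oneH ⊗ₜ h) = h) ∧ (∀ h : H, mH (h ⊗ₜ oneH) = h) ∧
  (dH ∘ₗ mH = sweedlerPair k dH dH mH mH) ∧
  (∀ h h' : H, eH (mH (h ⊗ₜ h')) = eH h * eH h') ∧
  -- group-likes
  (dM e = e ⊗ₜ e) ∧ (eM e = 1) ∧ (dH oneH = oneH ⊗ₜ oneH) ∧ (eH oneH = 1) ∧
  -- `▷`, `ψ`, `·`, `θ` are coalgebra morphisms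
  (dM ∘ₗ act = sweedlerPair k dH dM act act) ∧
  (∀ (h : H) (x : M), eM (act (h ⊗ₜ x)) = eH h * eM x) ∧
  (dH ∘ₗ psi = sweedlerPair k dH dM psi psi) ∧
  (∀ (h : H) (x : M), eH (psi (h ⊗ₜ x)) = eH h * eM x) ∧
  (dM ∘ₗ mM = sweedlerPair k dM dM mM mM) ∧
  (∀ x x' : M, eM (mM (x ⊗ₜ x')) = eM x * eM x') ∧
  (dH ∘ₗ th = sweedlerPair k dM dM th th) ∧
  (∀ x x' : M, eH (th (x ⊗ₜ x')) = eM x * eM x') ∧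
  -- normalization conditions
  (∀ x : M, act (oneH ⊗ₜ x) = x) ∧
  (∀ h : H, psi (h ⊗ₜ e) = h) ∧
  (∀ h : H, act (h ⊗ₜ e) = eH h • e) ∧
  (∀ x : M, psi (oneH ⊗ₜ x) = eM x • oneH) ∧
  (th (e ⊗ₜ e) = oneH) ∧
  -- (3.14) `e·x = x = x·e`
  (∀ x : M, mM (e ⊗ₜ x) = x) ∧ (∀ x : M, mM (x ⊗ₜ e) = x) ∧
  -- (3.15) `θ(x,e) = ε(x)1 = θ(e,x)`
  (∀ x : M, th (x ⊗ₜ e) = eM x • oneH) ∧ (∀ x : M, th (e ⊗ₜ x) = eM x • oneH) ∧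
  -- (3.16) `h▷(x·x') = (h₍₁₎▷x₍₁₎)·(ψ(h₍₂₎,x₍₂₎)▷x')`
  (act ∘ₗ (LinearMap.lTensor H mM) =
    mM ∘ₗ (LinearMap.lTensor M act) ∘ₗ
      (TensorProduct.assoc k M H M).toLinearMap ∘ₗ
      (LinearMap.rTensor M (sweedlerPair k dH dM act psi)) ∘ₗ
      (TensorProduct.assoc k H M M).symm.toLinearMap) ∧
  -- (3.17) `ψ(h, x₍₁₎·x'₍₁₎)θ(x₍₂₎,x'₍₂₎)
  --          = θ(h₍₁₎▷x₍₁₎, ψ(h₍₂₎,x₍₂₎)▷x'₍₁₎)ψ(ψ(h₍₃₎,x₍₃₎),x'₍₂₎)`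
  (mH ∘ₗ (LinearMap.rTensor H psi) ∘ₗ
      (TensorProduct.assoc k H M H).symm.toLinearMap ∘ₗ
      (LinearMap.lTensor H (sweedlerPair k dM dM mM th)) =
    mH ∘ₗ (LinearMap.rTensor H th) ∘ₗ
      (TensorProduct.assoc k M M H).symm.toLinearMap ∘ₗ
      (LinearMap.lTensor M (TensorProduct.map act psi)) ∘ₗ
      (LinearMap.lTensor M
        (TensorProduct.tensorTensorTensorComm k H H M M).toLinearMap) ∘ₗ
      (TensorProduct.assoc k M (H ⊗[k] H) (M ⊗[k] M)).toLinearMap ∘ₗ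
      (LinearMap.lTensor (M ⊗[k] (H ⊗[k] H)) dM) ∘ₗ
      (LinearMap.rTensor M (sweedlerPair k dH dM act (sweedlerPair k dH dM psi psi))) ∘ₗ
      (TensorProduct.assoc k H M M).symm.toLinearMap) ∧
  -- (3.18) `ψ(hh', x) = ψ(h, h'₍₁₎▷x₍₁₎)ψ(h'₍₂₎, x₍₂₎)`
  (psi ∘ₗ (LinearMap.rTensor M mH) =
    mH ∘ₗ (LinearMap.rTensor H psi) ∘ₗ
      (TensorProduct.assoc k H M H).symm.toLinearMap ∘ₗ
      (LinearMap.lTensor H (sweedlerPair k dH dM act psi)) ∘ₗ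
      (TensorProduct.assoc k H H M).toLinearMap) ∧
  -- (3.19) `M` is a left `H`-module
  (act ∘ₗ (LinearMap.rTensor M mH) =
    act ∘ₗ (LinearMap.lTensor H act) ∘ₗ (TensorProduct.assoc k H H M).toLinearMap) ∧
  -- (3.20) `x·(x'·x'') = (x₍₁₎·x'₍₁₎)·(θ(x₍₂₎,x'₍₂₎)▷x'')`
  (mM ∘ₗ (LinearMap.lTensor M mM) =
    mM ∘ₗ (LinearMap.lTensor M act) ∘ₗ
      (TensorProduct.assoc k M H M).toLinearMap ∘ₗ
      (LinearMap.rTensor M (sweedlerPair k dM dM mM th)) ∘ₗ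
      (TensorProduct.assoc k M M M).symm.toLinearMap) ∧
  -- (3.21) `θ(x, x'₍₁₎·x''₍₁₎)θ(x'₍₂₎,x''₍₂₎)
  --          = θ(x₍₁₎·x'₍₁₎, θ(x₍₂₎,x'₍₂₎)▷x''₍₁₎)ψ(θ(x₍₃₎,x'₍₃₎),x''₍₂₎)`
  (mH ∘ₗ (LinearMap.rTensor H th) ∘ₗ
      (TensorProduct.assoc k M M H).symm.toLinearMap ∘ₗ
      (LinearMap.lTensor M (sweedlerPair k dM dM mM th)) =
    mH ∘ₗ (LinearMap.rTensor H th) ∘ₗ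
      (TensorProduct.assoc k M M H).symm.toLinearMap ∘ₗ
      (LinearMap.lTensor M (TensorProduct.map act psi)) ∘ₗ
      (LinearMap.lTensor M
        (TensorProduct.tensorTensorTensorComm k H H M M).toLinearMap) ∘ₗ
      (TensorProduct.assoc k M (H ⊗[k] H) (M ⊗[k] M)).toLinearMap ∘ₗ
      (LinearMap.lTensor (M ⊗[k] (H ⊗[k] H)) dM) ∘ₗ
      (LinearMap.rTensor M (sweedlerPair k dM dM mM (sweedlerPair k dM dM th th))) ∘ₗ
      (TensorProduct.assoc k M M M).symm.toLinearMap)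

/-!
For coalgebra morphisms `f : C → A` and `g : C → B`, the map `c ↦ f(c₍₁₎) ⊗ g(c₍₂₎)` is again a
coalgebra morphism if and only if `f` and `g` cocommute, i.e. `g(c₍₂₎) ⊗ f(c₍₁₎) =
g(c₍₁₎) ⊗ f(c₍₂₎)`: if they do, the middle tensor factors of `Δ` may be exchanged, and conversely
`(ε ⊗ id) ⊗ (id ⊗ ε)` applied to compatibility with `Δ` returns the cocommutation.

The product on `M ⊗ H` is a composite of `Φ = (▷, ψ) ∘ Δ`, `Ξ = (·, θ) ∘ Δ` and the multiplication
of `H`, so it is a coalgebra morphism as soon as `Φ` and `Ξ` are. Conversely `e` and `1` are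
group-like, so `h ⊗ x ↦ (e ⊗ h) ⊗ (x ⊗ 1)` and `x ⊗ x' ↦ (x ⊗ 1) ⊗ (x' ⊗ 1)` are coalgebra
morphisms, and restricting the product along them gives back `Φ` and `Ξ`.
-/

section Development

open Coalgebra

variable {R A B C D : Type*} [CommSemiring R]
  [AddCommMonoid A] [Module R A] [AddCommMonoid B] [Module R B]
  [AddCommMonoid C] [Module R C] [AddCommMonoid D] [Module R D]

section ComulPair

variable {A' B' : Type*} [AddCommMonoid A'] [Module R A'] [AddCommMonoid B'] [Module R B']

/-- The map `c ↦ f(c₍₁₎) ⊗ g(c₍₂₎)` out of a coalgebra. -/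
noncomputable def comulPair [CoalgebraStruct R C] (f : C →ₗ[R] A) (g : C →ₗ[R] B) :
    C →ₗ[R] A ⊗[R] B :=
  TensorProduct.map f g ∘ₗ comul

/-- Two linear maps out of a coalgebra cocommute if `g(c₍₂₎) ⊗ f(c₍₁₎) = g(c₍₁₎) ⊗ f(c₍₂₎)`;
conditions (3.22) and (3.23) say this of `▷, ψ` and of `·, θ`. -/
def Cocommute [CoalgebraStruct R C] (f : C →ₗ[R] A) (g : C →ₗ[R] B) : Prop :=
  (TensorProduct.comm R A B).toLinearMap ∘ₗ comulPair f g = comulPair g f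

lemma map_comp_comulPair [CoalgebraStruct R C] (u : A →ₗ[R] A') (v : B →ₗ[R] B')
    (f : C →ₗ[R] A) (g : C →ₗ[R] B) :
    TensorProduct.map u v ∘ₗ comulPair f g = comulPair (u ∘ₗ f) (v ∘ₗ g) := by
  rw [comulPair, comulPair, TensorProduct.map_comp, comp_assoc]

lemma lTensor_comp_comulPair [CoalgebraStruct R C] (v : B →ₗ[R] B')
    (f : C →ₗ[R] A) (g : C →ₗ[R] B) :
    lTensor A v ∘ₗ comulPair f g = comulPair f (v ∘ₗ g) :=
  map_comp_comulPair .id v f g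

lemma rTensor_comp_comulPair [CoalgebraStruct R C] (u : A →ₗ[R] A')
    (f : C →ₗ[R] A) (g : C →ₗ[R] B) :
    rTensor B u ∘ₗ comulPair f g = comulPair (u ∘ₗ f) g :=
  map_comp_comulPair u .id f g

lemma comulPair_comp_coalgHom [CoalgebraStruct R C] [CoalgebraStruct R D]
    (f : C →ₗ[R] A) (g : C →ₗ[R] B) (i : D →ₗc[R] C) :
    comulPair f g ∘ₗ (i : D →ₗ[R] C) =
      comulPair (f ∘ₗ (i : D →ₗ[R] C)) (g ∘ₗ (i : D →ₗ[R] C)) := by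
  rw [comulPair, comp_assoc, ← CoalgHomClass.map_comp_comul]
  exact map_comp_comulPair f g _ _

lemma comul_comp_coalgHom [CoalgebraStruct R A] [CoalgebraStruct R C] (f : C →ₗc[R] A) :
    comul ∘ₗ (f : C →ₗ[R] A) = comulPair (f : C →ₗ[R] A) (f : C →ₗ[R] A) :=
  (CoalgHomClass.map_comp_comul f).symm

lemma assoc_comp_comulPair [Coalgebra R C] (f : C →ₗ[R] A) (g : C →ₗ[R] B) (h : C →ₗ[R] D) :
    (TensorProduct.assoc R A B D).toLinearMap ∘ₗ comulPair (comulPair f g) h =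
      comulPair f (comulPair g h) := by
  simp only [comulPair, coassoc_simps]

lemma comulPair_comulPair_comulPair [Coalgebra R C] (f : C →ₗ[R] A) (f' : C →ₗ[R] A')
    (g : C →ₗ[R] B) (g' : C →ₗ[R] B') :
    comulPair (comulPair f f') (comulPair g g') =
      (TensorProduct.assoc R A A' (B ⊗[R] B')).symm.toLinearMap ∘ₗ
        lTensor A (TensorProduct.assoc R A' B B').toLinearMap ∘ₗ
        comulPair f (comulPair (comulPair f' g) g') := by
  rw [lTensor_comp_comulPair, assoc_comp_comulPair, ← assoc_comp_comulPair f f',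
    LinearEquiv.symm_comp_assoc]

lemma comulPair_comulPair_coalgHom [CoalgebraStruct R A] [Coalgebra R C]
    (f : C →ₗc[R] A) (g : C →ₗ[R] B) :
    comulPair (f : C →ₗ[R] A) (comulPair (f : C →ₗ[R] A) g) =
      (TensorProduct.assoc R A A B).toLinearMap ∘ₗ rTensor B comul ∘ₗ
        comulPair (f : C →ₗ[R] A) g := by
  rw [rTensor_comp_comulPair, comul_comp_coalgHom, assoc_comp_comulPair]

lemma comul_comp_eq_comulPair_of_comp_coalgHom [CoalgebraStruct R A] [CoalgebraStruct R C]
    [CoalgebraStruct R D] {m : C →ₗ[R] A} (h : comul ∘ₗ m = comulPair m m) (i : D →ₗc[R] C)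
    {f : D →ₗ[R] A} (hf : m ∘ₗ (i : D →ₗ[R] C) = f) :
    comul ∘ₗ f = comulPair f f := by
  rw [← hf, ← comp_assoc, h, comulPair_comp_coalgHom]

end ComulPair

section Counit

/-- The projection `id ⊗ ε` of a tensor product of coalgebras onto its first factor. -/
noncomputable def tensorFst (A : Type*) [AddCommMonoid A] [Module R A] [CoalgebraStruct R B] :
    A ⊗[R] B →ₗ[R] A :=
  (TensorProduct.rid R A).toLinearMap ∘ₗ lTensor A counit

/-- The projection `ε ⊗ id` of a tensor product of coalgebras onto its second factor. -/
noncomputable def tensorSnd (B : Type*) [AddCommMonoid B] [Module R B] [CoalgebraStruct R A] :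
    A ⊗[R] B →ₗ[R] B :=
  (TensorProduct.lid R B).toLinearMap ∘ₗ rTensor B counit

lemma tensorFst_comp_comulPair [Coalgebra R C] [CoalgebraStruct R B]
    (f : C →ₗ[R] A) (g : C →ₗc[R] B) :
    tensorFst A ∘ₗ comulPair f (g : C →ₗ[R] B) = f := by
  rw [tensorFst, comp_assoc, lTensor_comp_comulPair, CoalgHomClass.counit_comp, comulPair,
    CoassocSimps.map_counit_comp_comul_right]
  ext; simp

lemma tensorSnd_comp_comulPair [Coalgebra R C] [CoalgebraStruct R A]
    (f : C →ₗc[R] A) (g : C →ₗ[R] B) :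
    tensorSnd B ∘ₗ comulPair (f : C →ₗ[R] A) g = g := by
  rw [tensorSnd, comp_assoc, rTensor_comp_comulPair, CoalgHomClass.counit_comp, comulPair,
    CoassocSimps.map_counit_comp_comul_left]
  ext; simp

lemma map_tensorSnd_tensorFst_comp_comul [Coalgebra R A] [Coalgebra R B] :
    TensorProduct.map (tensorSnd (R := R) (A := A) B) (tensorFst (R := R) (B := B) A) ∘ₗ comul =
      (TensorProduct.comm R A B).toLinearMap := by
  have swap : TensorProduct.map (tensorSnd (R := R) (A := A) B) (tensorFst (R := R) (B := B) A) ∘ₗ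
      (tensorTensorTensorComm R A A B B).toLinearMap =
      (TensorProduct.comm R A B).toLinearMap ∘ₗ
        TensorProduct.map (tensorSnd (R := R) (A := A) A) (tensorFst (R := R) (B := B) B) := by
    ext a a' b b'
    simp [tensorFst, tensorSnd, smul_tmul', smul_smul, mul_comm]
  calc
    _ = (TensorProduct.comm R A B).toLinearMap ∘ₗ
          TensorProduct.map (tensorSnd (R := R) (A := A) A) (tensorFst (R := R) (B := B) B) ∘ₗ
            TensorProduct.map comul comul := by
      rw [← comp_assoc, ← swap]; rfl
    _ = _ := by
      rw [← TensorProduct.map_comp]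
      ext; simp [tensorFst, tensorSnd]

end Counit

section Cocommute

variable [Coalgebra R C]

lemma Cocommute.comul_comp_comulPair [CoalgebraStruct R A] [CoalgebraStruct R B]
    {f : C →ₗc[R] A} {g : C →ₗc[R] B}
    (h : Cocommute (f : C →ₗ[R] A) (g : C →ₗ[R] B)) :
    comul ∘ₗ comulPair (f : C →ₗ[R] A) (g : C →ₗ[R] B) =
      comulPair (comulPair (f : C →ₗ[R] A) (g : C →ₗ[R] B))
        (comulPair (f : C →ₗ[R] A) (g : C →ₗ[R] B)) := by
  have middle : (tensorTensorTensorComm R A A B B).toLinearMap ∘ₗ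
      (TensorProduct.assoc R A A (B ⊗[R] B)).symm.toLinearMap ∘ₗ
        lTensor A (TensorProduct.assoc R A B B).toLinearMap =
      (TensorProduct.assoc R A B (A ⊗[R] B)).symm.toLinearMap ∘ₗ
        lTensor A (TensorProduct.assoc R B A B).toLinearMap ∘ₗ
        lTensor A (rTensor B (TensorProduct.comm R A B).toLinearMap) := by
    ext; simp
  calc
    _ = (tensorTensorTensorComm R A A B B).toLinearMap ∘ₗ
          TensorProduct.map comul comul ∘ₗ comulPair (f : C →ₗ[R] A) (g : C →ₗ[R] B) := rfl
    _ = (tensorTensorTensorComm R A A B B).toLinearMap ∘ₗ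
          (TensorProduct.assoc R A A (B ⊗[R] B)).symm.toLinearMap ∘ₗ
            lTensor A (TensorProduct.assoc R A B B).toLinearMap ∘ₗ
            comulPair (f : C →ₗ[R] A)
              (comulPair (comulPair (f : C →ₗ[R] A) (g : C →ₗ[R] B)) (g : C →ₗ[R] B)) := by
      rw [map_comp_comulPair, comul_comp_coalgHom, comul_comp_coalgHom,
        comulPair_comulPair_comulPair]
    _ = (TensorProduct.assoc R A B (A ⊗[R] B)).symm.toLinearMap ∘ₗ
          lTensor A (TensorProduct.assoc R B A B).toLinearMap ∘ₗ
          comulPair (f : C →ₗ[R] A)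
            (comulPair (comulPair (g : C →ₗ[R] B) (f : C →ₗ[R] A)) (g : C →ₗ[R] B)) := by
      rw [← h, ← rTensor_comp_comulPair, ← lTensor_comp_comulPair]
      simpa only [comp_assoc] using congr($middle ∘ₗ _)
    _ = _ := (comulPair_comulPair_comulPair _ _ _ _).symm

lemma cocommute_of_comul_comp_comulPair [Coalgebra R A] [Coalgebra R B]
    {f : C →ₗc[R] A} {g : C →ₗc[R] B}
    (h : comul ∘ₗ comulPair (f : C →ₗ[R] A) (g : C →ₗ[R] B) =
      comulPair (comulPair (f : C →ₗ[R] A) (g : C →ₗ[R] B))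
        (comulPair (f : C →ₗ[R] A) (g : C →ₗ[R] B))) :
    Cocommute (f : C →ₗ[R] A) (g : C →ₗ[R] B) := by
  rw [Cocommute, ← map_tensorSnd_tensorFst_comp_comul, comp_assoc, h, map_comp_comulPair,
    tensorSnd_comp_comulPair, tensorFst_comp_comulPair]

/-- A cocommuting pair of coalgebra morphisms, as a morphism into the tensor product. -/
noncomputable def Cocommute.coalgHom [CoalgebraStruct R A] [CoalgebraStruct R B]
    {f : C →ₗc[R] A} {g : C →ₗc[R] B} (h : Cocommute (f : C →ₗ[R] A) (g : C →ₗ[R] B)) :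
    C →ₗc[R] A ⊗[R] B where
  toLinearMap := comulPair (f : C →ₗ[R] A) (g : C →ₗ[R] B)
  counit_comp := by
    have : counit (R := R) (A := A ⊗[R] B) = counit ∘ₗ tensorFst A := by
      ext; simp [tensorFst]
    rw [this, comp_assoc, tensorFst_comp_comulPair, CoalgHomClass.counit_comp]
  map_comp_comul := h.comul_comp_comulPair.symm

end Cocommute

section TwistedMul

/-- The right action `(a ⊗ b) b' = a ⊗ μ(b ⊗ b')` on `A ⊗ B` given by a multiplication `μ`. -/
noncomputable def rightMul (μ : B ⊗[R] B →ₗ[R] B) : (A ⊗[R] B) ⊗[R] B →ₗ[R] A ⊗[R] B :=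
  lTensor A μ ∘ₗ (TensorProduct.assoc R A B B).toLinearMap

/-- The product `(a ⊗ b)(a' ⊗ b') = (Ξ(a ⊗ a'') b'') b'` with `Φ(b ⊗ a') = a'' ⊗ b''`. The
cocycle double cross product is the case `Φ = (▷, ψ) ∘ Δ`, `Ξ = (·, θ) ∘ Δ`. -/
noncomputable def twistedMul (Φ : B ⊗[R] A →ₗ[R] A ⊗[R] B) (Ξ : A ⊗[R] A →ₗ[R] A ⊗[R] B)
    (μ : B ⊗[R] B →ₗ[R] B) : (A ⊗[R] B) ⊗[R] (A ⊗[R] B) →ₗ[R] A ⊗[R] B :=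
  rightMul μ ∘ₗ
    rTensor B (rightMul μ ∘ₗ rTensor B Ξ ∘ₗ (TensorProduct.assoc R A A B).symm.toLinearMap ∘ₗ
      lTensor A Φ ∘ₗ (TensorProduct.assoc R A B A).toLinearMap) ∘ₗ
    (TensorProduct.assoc R (A ⊗[R] B) A B).symm.toLinearMap

variable {Φ : B ⊗[R] A →ₗ[R] A ⊗[R] B} {Ξ : A ⊗[R] A →ₗ[R] A ⊗[R] B} {μ : B ⊗[R] B →ₗ[R] B}
  {e : A} {u : B}

lemma twistedMul_unit_tmul_tmul_unit (hΞ : ∀ a, Ξ (e ⊗ₜ a) = a ⊗ₜ u)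
    (one_mul : ∀ b, μ (u ⊗ₜ b) = b) (mul_one : ∀ b, μ (b ⊗ₜ u) = b) (b : B) (a : A) :
    twistedMul Φ Ξ μ ((e ⊗ₜ b) ⊗ₜ (a ⊗ₜ u)) = Φ (b ⊗ₜ a) := by
  simp only [twistedMul, rightMul, coe_comp, LinearEquiv.coe_coe, Function.comp_apply,
    assoc_tmul, assoc_symm_tmul, rTensor_tmul, lTensor_tmul]
  induction Φ (b ⊗ₜ a) with
  | zero => simp
  | add s t hs ht => simp only [tmul_add, add_tmul, map_add, hs, ht]
  | tmul a' b' => simp [hΞ, one_mul, mul_one]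

lemma twistedMul_tmul_unit_tmul_unit (hΦ : ∀ a, Φ (u ⊗ₜ a) = a ⊗ₜ u)
    (mul_one : ∀ b, μ (b ⊗ₜ u) = b) (a a' : A) :
    twistedMul Φ Ξ μ ((a ⊗ₜ u) ⊗ₜ (a' ⊗ₜ u)) = Ξ (a ⊗ₜ a') := by
  simp only [twistedMul, rightMul, coe_comp, LinearEquiv.coe_coe, Function.comp_apply,
    assoc_tmul, assoc_symm_tmul, rTensor_tmul, lTensor_tmul, hΦ]
  induction Ξ (a ⊗ₜ a') with
  | zero => simp
  | add s t hs ht => simp only [add_tmul, map_add, hs, ht]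
  | tmul a' b' => simp [mul_one]

variable [Coalgebra R A] [Coalgebra R B]

/-- `rightMul` as a morphism of coalgebras. -/
noncomputable def rightMulCoalgHom (A : Type*) [AddCommMonoid A] [Module R A] [Coalgebra R A]
    (μ : B ⊗[R] B →ₗc[R] B) : (A ⊗[R] B) ⊗[R] B →ₗc[R] A ⊗[R] B :=
  (Coalgebra.TensorProduct.map (.id R A) μ).comp
    (Coalgebra.TensorProduct.assoc R R A B B).toCoalgHom

/-- `twistedMul` as a morphism of coalgebras. -/
noncomputable def twistedMulCoalgHom (Φ : B ⊗[R] A →ₗc[R] A ⊗[R] B)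
    (Ξ : A ⊗[R] A →ₗc[R] A ⊗[R] B) (μ : B ⊗[R] B →ₗc[R] B) :
    (A ⊗[R] B) ⊗[R] (A ⊗[R] B) →ₗc[R] A ⊗[R] B :=
  (rightMulCoalgHom A μ).comp <|
    (Coalgebra.TensorProduct.map
      ((rightMulCoalgHom A μ).comp <| (Coalgebra.TensorProduct.map Ξ (.id R B)).comp <|
        (Coalgebra.TensorProduct.assoc R R A A B).symm.toCoalgHom.comp <|
        (Coalgebra.TensorProduct.map (.id R A) Φ).comp
          (Coalgebra.TensorProduct.assoc R R A B A).toCoalgHom)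
      (.id R B)).comp
    (Coalgebra.TensorProduct.assoc R R (A ⊗[R] B) A B).symm.toCoalgHom

lemma comul_comp_twistedMul (Φ : B ⊗[R] A →ₗc[R] A ⊗[R] B)
    (Ξ : A ⊗[R] A →ₗc[R] A ⊗[R] B) (μ : B ⊗[R] B →ₗc[R] B) :
    comul ∘ₗ twistedMul Φ.toLinearMap Ξ.toLinearMap μ.toLinearMap =
      comulPair (twistedMul Φ.toLinearMap Ξ.toLinearMap μ.toLinearMap)
        (twistedMul Φ.toLinearMap Ξ.toLinearMap μ.toLinearMap) :=
  comul_comp_coalgHom (twistedMulCoalgHom Φ Ξ μ)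

end TwistedMul

section GroupLike

variable {e : A} {u : B}

/-- The coalgebra morphism `b ↦ e ⊗ b` for a group-like `e`. -/
noncomputable def groupLikeTMul [Coalgebra R A] (B : Type*) [AddCommMonoid B] [Module R B]
    [CoalgebraStruct R B] (he : IsGroupLikeElem R e) : B →ₗc[R] A ⊗[R] B where
  toLinearMap := TensorProduct.mk R A B e
  counit_comp := by ext; simp [he.counit_eq_one]
  map_comp_comul := by
    ext b
    simp only [coe_comp, Function.comp_apply, TensorProduct.mk_apply, TensorProduct.comul_tmul,
      he.comul_eq_tmul_self]
    induction comul (R := R) b with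
    | zero => simp
    | add s t hs ht => simp only [map_add, tmul_add, hs, ht]
    | tmul b b' => simp

/-- The coalgebra morphism `a ↦ a ⊗ u` for a group-like `u`. -/
noncomputable def tmulGroupLike [Coalgebra R B] (A : Type*) [AddCommMonoid A] [Module R A]
    [CoalgebraStruct R A] (hu : IsGroupLikeElem R u) : A →ₗc[R] A ⊗[R] B where
  toLinearMap := (TensorProduct.mk R A B).flip u
  counit_comp := by ext; simp [hu.counit_eq_one]
  map_comp_comul := by
    ext a
    simp only [coe_comp, Function.comp_apply, flip_apply, TensorProduct.mk_apply,
      TensorProduct.comul_tmul, hu.comul_eq_tmul_self]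
    induction comul (R := R) a with
    | zero => simp
    | add s t hs ht => simp only [map_add, add_tmul, hs, ht]
    | tmul a a' => simp

lemma comulPair_groupLike_tmul [Coalgebra R A] [Coalgebra R B]
    (he : IsGroupLikeElem R e) {f : A ⊗[R] B →ₗ[R] B} {g : A ⊗[R] B →ₗ[R] C} {c : C}
    (hf : ∀ b, f (e ⊗ₜ b) = b) (hg : ∀ b, g (e ⊗ₜ b) = counit (R := R) b • c) (b : B) :
    comulPair f g (e ⊗ₜ b) = b ⊗ₜ c := by
  have hf' : f ∘ₗ (groupLikeTMul B he : B →ₗ[R] A ⊗[R] B) = .id := LinearMap.ext hf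
  have hg' : g ∘ₗ (groupLikeTMul B he : B →ₗ[R] A ⊗[R] B) = toSpanSingleton R C c ∘ₗ counit :=
    LinearMap.ext hg
  calc
    comulPair f g (e ⊗ₜ b) = comulPair .id (toSpanSingleton R C c ∘ₗ counit) b := by
      rw [← hf', ← hg', ← comulPair_comp_coalgHom]; rfl
    _ = lTensor B (toSpanSingleton R C c) (lTensor B counit (comul b)) := by
      rw [← lTensor_comp_comulPair]; rfl
    _ = b ⊗ₜ c := by simp

end GroupLike

theorem cocycle_double_cross_product_comul_multiplicative_iff_general
    [Coalgebra R A] [Coalgebra R B] (act : B ⊗[R] A →ₗc[R] A) (psi : B ⊗[R] A →ₗc[R] B)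
    (mul : A ⊗[R] A →ₗc[R] A) (th : A ⊗[R] A →ₗc[R] B) (μ : B ⊗[R] B →ₗc[R] B)
    {e : A} {u : B} (he : IsGroupLikeElem R e) (hu : IsGroupLikeElem R u)
    (unit_mul : ∀ b, μ (u ⊗ₜ b) = b) (mul_unit : ∀ b, μ (b ⊗ₜ u) = b)
    (unit_act : ∀ a, act (u ⊗ₜ a) = a) (psi_unit : ∀ a, psi (u ⊗ₜ a) = counit (R := R) a • u)
    (e_mul : ∀ a, mul (e ⊗ₜ a) = a) (th_e : ∀ a, th (e ⊗ₜ a) = counit (R := R) a • u) :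
    letI m := twistedMul (comulPair act.toLinearMap psi.toLinearMap)
      (comulPair mul.toLinearMap th.toLinearMap) μ.toLinearMap
    comul ∘ₗ m = TensorProduct.map m m ∘ₗ comul ↔
      Cocommute act.toLinearMap psi.toLinearMap ∧ Cocommute mul.toLinearMap th.toLinearMap := by
  have Φ_unit := comulPair_groupLike_tmul hu unit_act psi_unit
  have Ξ_unit := comulPair_groupLike_tmul he e_mul th_e
  refine ⟨fun h ↦ ⟨?_, ?_⟩, fun ⟨hΦ, hΞ⟩ ↦ comul_comp_twistedMul hΦ.coalgHom hΞ.coalgHom μ⟩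
  · let incl := Coalgebra.TensorProduct.map (groupLikeTMul B he) (tmulGroupLike A hu)
    exact cocommute_of_comul_comp_comulPair <|
      comul_comp_eq_comulPair_of_comp_coalgHom h incl <| TensorProduct.ext' <|
        twistedMul_unit_tmul_tmul_unit Ξ_unit unit_mul mul_unit
  · let incl := Coalgebra.TensorProduct.map (tmulGroupLike A hu) (tmulGroupLike A hu)
    exact cocommute_of_comul_comp_comulPair <|
      comul_comp_eq_comulPair_of_comp_coalgHom h incl <| TensorProduct.ext' <|
        twistedMul_tmul_unit_tmul_unit Φ_unit mul_unit

section Bundle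

/-- A coalgebra structure from a comultiplication and a counit, with the counit laws stated
through the unitors as in `CocycleDCPPair`. -/
abbrev coalgebraOfUnitors (δ : C →ₗ[R] C ⊗[R] C) (ε : C →ₗ[R] R)
    (coassoc : (TensorProduct.assoc R C C C).toLinearMap ∘ₗ rTensor C δ ∘ₗ δ = lTensor C δ ∘ₗ δ)
    (rTensor_counit : (TensorProduct.lid R C).toLinearMap ∘ₗ rTensor C ε ∘ₗ δ = .id)
    (lTensor_counit : (TensorProduct.rid R C).toLinearMap ∘ₗ lTensor C ε ∘ₗ δ = .id) :
    Coalgebra R C where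
  comul := δ
  counit := ε
  coassoc := coassoc
  rTensor_counit_comp_comul := LinearMap.ext fun c ↦
    (TensorProduct.lid R C).injective <| by simpa using congr($rTensor_counit c)
  lTensor_counit_comp_comul := LinearMap.ext fun c ↦
    (TensorProduct.rid R C).injective <| by simpa using congr($lTensor_counit c)

/-- A coalgebra morphism out of a tensor product, with counitality stated on pure tensors as in
`CocycleDCPPair`. -/
def tensorCoalgHom [CoalgebraStruct R A] [CoalgebraStruct R B] [CoalgebraStruct R C]
    (f : A ⊗[R] B →ₗ[R] C)
    (counit_apply : ∀ a b,
      counit (R := R) (f (a ⊗ₜ b)) = counit (R := R) a * counit (R := R) b)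
    (comul_comp : comul ∘ₗ f = comulPair f f) : A ⊗[R] B →ₗc[R] C where
  toLinearMap := f
  counit_comp := TensorProduct.ext' fun a b ↦ by simp [counit_apply, mul_comm]
  map_comp_comul := comul_comp.symm

end Bundle

lemma cdcpMul_eq_twistedMul [Coalgebra k M] [Coalgebra k H] (act : H ⊗[k] M →ₗc[k] M)
    (psi : H ⊗[k] M →ₗ[k] H) (mM : M ⊗[k] M →ₗ[k] M) (th : M ⊗[k] M →ₗ[k] H)
    (mH : H ⊗[k] H →ₗ[k] H) :
    cdcpMul k M H comul comul act.toLinearMap psi mM th mH =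
      twistedMul (comulPair act.toLinearMap psi) (comulPair mM th) mH := by
  have hΘ : sweedlerPair k comul comul act.toLinearMap
      (sweedlerPair k comul comul act.toLinearMap psi) =
      (TensorProduct.assoc k M M H).toLinearMap ∘ₗ rTensor H comul ∘ₗ
        comulPair act.toLinearMap psi := comulPair_comulPair_coalgHom act psi
  ext x h x' h'
  simp only [cdcpMul, hΘ, twistedMul, rightMul, AlgebraTensorModule.curry_apply, curry_apply,
    restrictScalars_self, coe_comp, LinearEquiv.coe_coe, Function.comp_apply, lTensor_tmul,
    rTensor_tmul, assoc_tmul, assoc_symm_tmul]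
  induction comulPair act.toLinearMap psi (h ⊗ₜ x') with
  | zero => simp
  | add s t hs ht => simp only [tmul_add, add_tmul, map_add, hs, ht]
  | tmul a b =>
    simp only [comulPair, coe_comp, Function.comp_apply, TensorProduct.comul_tmul, rTensor_tmul,
      assoc_symm_tmul]
    induction comul (R := k) x with
    | zero => simp
    | add s t hs ht => simp only [add_tmul, map_add, hs, ht]
    | tmul x₁ x₂ =>
      induction comul (R := k) a with
      | zero => simp
      | add s t hs ht => simp only [tmul_add, add_tmul, map_add, hs, ht]
      | tmul a₁ a₂ => simp

end Development

/-- For a (right) cocycle double cross product pair `(M, H)`, the tensor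
product comultiplication `Δ(x⊗h) = (x₍₁₎⊗h₍₁₎)⊗(x₍₂₎⊗h₍₂₎)` is multiplicative with
respect to the cocycle double cross product multiplication if and only if
`ψ(h₍₂₎,x₍₂₎) ⊗ h₍₁₎▷x₍₁₎ = ψ(h₍₁₎,x₍₁₎) ⊗ h₍₂₎▷x₍₂₎` and
`θ(x₍₂₎,x'₍₂₎) ⊗ x₍₁₎·x'₍₁₎ = θ(x₍₁₎,x'₍₁₎) ⊗ x₍₂₎·x'₍₂₎`. -/
theorem cocycle_double_cross_product_comul_multiplicative_iff
    (dM : M →ₗ[k] M ⊗[k] M) (eM : M →ₗ[k] k)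
    (dH : H →ₗ[k] H ⊗[k] H) (eH : H →ₗ[k] k)
    (act : H ⊗[k] M →ₗ[k] M) (psi : H ⊗[k] M →ₗ[k] H)
    (mM : M ⊗[k] M →ₗ[k] M) (th : M ⊗[k] M →ₗ[k] H)
    (mH : H ⊗[k] H →ₗ[k] H) (e : M) (oneH : H)
    (hpair : CocycleDCPPair k M H dM eM dH eH act psi mM th mH e oneH) :
    letI ΔG : M ⊗[k] H →ₗ[k] (M ⊗[k] H) ⊗[k] (M ⊗[k] H) :=
      (TensorProduct.tensorTensorTensorComm k M M H H).toLinearMap ∘ₗ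
        (TensorProduct.map dM dH)
    letI mulG := cdcpMul k M H dM dH act psi mM th mH
    -- `Δ` is multiplicative
    (ΔG ∘ₗ mulG =
      (TensorProduct.map mulG mulG) ∘ₗ
        (TensorProduct.tensorTensorTensorComm k
          (M ⊗[k] H) (M ⊗[k] H) (M ⊗[k] H) (M ⊗[k] H)).toLinearMap ∘ₗ
        (TensorProduct.map ΔG ΔG)) ↔
    -- (3.22) `ψ(h₍₂₎,x₍₂₎) ⊗ h₍₁₎▷x₍₁₎ = ψ(h₍₁₎,x₍₁₎) ⊗ h₍₂₎▷x₍₂₎`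
    (((TensorProduct.comm k (M) (H)).toLinearMap ∘ₗ sweedlerPair k dH dM act psi =
        (TensorProduct.map psi act) ∘ₗ
          (TensorProduct.tensorTensorTensorComm k H H M M).toLinearMap ∘ₗ
          (TensorProduct.map dH dM)) ∧
     -- (3.23) `θ(x₍₂₎,x'₍₂₎) ⊗ x₍₁₎·x'₍₁₎ = θ(x₍₁₎,x'₍₁₎) ⊗ x₍₂₎·x'₍₂₎`
     ((TensorProduct.comm k (M) (H)).toLinearMap ∘ₗ sweedlerPair k dM dM mM th =
        (TensorProduct.map th mM) ∘ₗ
          (TensorProduct.tensorTensorTensorComm k M M M M).toLinearMap ∘ₗ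
          (TensorProduct.map dM dM))) := by
  obtain ⟨dM_assoc, dM_lid, dM_rid, dH_assoc, dH_lid, dH_rid, -, unit_mul, mul_unit, dmH, emH,
    de, ee, d1, e1, dact, eact, dpsi, epsi, dmM, emM, dth, eth, unit_act, -, -, psi_unit, -,
    e_mul, -, -, th_e, -⟩ := hpair
  let := coalgebraOfUnitors dM eM dM_assoc dM_lid dM_rid
  let := coalgebraOfUnitors dH eH dH_assoc dH_lid dH_rid
  let act' := tensorCoalgHom act eact dact
  have mul_eq : cdcpMul k M H dM dH act psi mM th mH = _ :=
    cdcpMul_eq_twistedMul k M H act' psi mM th mH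
  rw [mul_eq]
  exact cocycle_double_cross_product_comul_multiplicative_iff_general act'
    (tensorCoalgHom psi epsi dpsi) (tensorCoalgHom mM emM dmM) (tensorCoalgHom th eth dth)
    (tensorCoalgHom mH emH dmH) ⟨ee, de⟩ ⟨e1, d1⟩ unit_mul mul_unit unit_act psi_unit e_mul th_e

end
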